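/- Let R be a commutative noetherian ring containing a field of characteristic zero, and let R ⊆ S be a module-finite extension of commutative rings such that S, regarded as an R-module, has finite projective dimension (i.e., S admits a finite resolution by projective R-modules). Then there exists a retraction ρ : S → R, i.e., an R-module homomorphism with ρ(1) = 1. -/

import Mathlib

/-- `S` has finite projective dimension as an `R`-module: there is an exact sequence
`0 → P_n → ⋯ → P_0 → S → 0` with each `P_i` projective, i.e. a projective resolution
whose terms vanish in degrees `> n`. -/
def HasFiniteProjectiveDimension (R M : Type) [CommRing R] [AddCommGroup M]
    [Module R M] : Prop :=
  ∃ (n : ℕ) (P : CategoryTheory.ProjectiveResolution (ModuleCat.of R M)),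
    ∀ i : ℕ, n < i → CategoryTheory.Limits.IsZero (P.complex.X i)

/-!
A trace on `End M` is a linear functional extending evaluation `M* ⊗ M → R`. Finite projective
modules carry one. If `N ⊆ F` with `F` finite projective, an endomorphism `φ` of `F ⧸ N` lifts to an
endomorphism `ψ` of `F` preserving `N`, and `tr ψ - tr (ψ|N)` depends only on `φ`: if `ψ` maps `F`
into `N`, the difference is `tr (ι θ) - tr (θ ι) = 0`, where `θ : F → N` is `ψ` and `ι : N → F` is
the inclusion. Hence, over a noetherian ring, every finite module `M` of finite projective dimension
carries a trace, and the trace of `1` reduces in every residue field to the Euler characteristic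
of `M`.

This integer is constant along specializations, and at a minimal prime `p` it is the ratio of the
lengths of `M_p` and `R_p`; so it is nonzero when `M` has full support. If `R` contains `ℚ`, the
trace of `1` is then a unit, and `s ↦ (tr 1)⁻¹ • tr (s • ·)` is the retraction `S → R`.
-/

open Module TensorProduct

universe u

section Trace

variable {R M N F : Type*} [CommRing R] [AddCommGroup M] [Module R M] [AddCommGroup N] [Module R N]
  [AddCommGroup F] [Module R F]

/-- A trace on `End M`: a linear functional that takes the endomorphism `x ↦ φ x • m` to `φ m`.
It extends the usual trace of finite free modules to modules that need not be projective. -/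
def IsTrace (T : End R M →ₗ[R] R) : Prop :=
  T ∘ₗ dualTensorHom R M M = contractLeft R M

lemma isTrace_iff {T : End R M →ₗ[R] R} :
    IsTrace T ↔ ∀ (φ : Dual R M) (m : M), T (dualTensorHom R M M (φ ⊗ₜ m)) = φ m :=
  ⟨fun hT φ m => LinearMap.congr_fun hT (φ ⊗ₜ m), fun hT => TensorProduct.ext' hT⟩

lemma isTrace_trace [Module.Finite R F] [Free R F] : IsTrace (LinearMap.trace R F) :=
  LinearMap.trace_eq_contract R F

lemma exists_isTrace_of_projective (R P : Type*) [CommRing R] [AddCommGroup P] [Module R P]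
    [Module.Finite R P] [Projective R P] : ∃ T : End R P →ₗ[R] R, IsTrace T :=
  ⟨contractLeft R P ∘ₗ (dualTensorHomEquiv R P P).symm.toLinearMap, LinearMap.ext fun t =>
    congrArg (contractLeft R P) ((dualTensorHomEquiv R P P).symm_apply_apply t)⟩

lemma IsTrace.comp_conj {T : End R N →ₗ[R] R} (hT : IsTrace T) (e : M ≃ₗ[R] N) :
    IsTrace (T ∘ₗ e.conj.toLinearMap) := by
  refine isTrace_iff.2 fun φ m => ?_
  have h : e.conj (dualTensorHom R M M (φ ⊗ₜ m)) =
      dualTensorHom R N N ((φ ∘ₗ e.symm.toLinearMap) ⊗ₜ e m) := by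
    ext x
    simp [LinearEquiv.conj_apply]
  calc T (e.conj (dualTensorHom R M M (φ ⊗ₜ m))) = φ (e.symm (e m)) := by
        rw [h, isTrace_iff.1 hT, LinearMap.comp_apply, LinearEquiv.coe_coe]
    _ = φ m := by rw [e.symm_apply_apply]

theorem IsTrace.apply_comp_comm {T : End R M →ₗ[R] R} {U : End R N →ₗ[R] R} (hT : IsTrace T)
    (hU : IsTrace U) {f : M →ₗ[R] N} (hf : f ∈ LinearMap.range (dualTensorHom R M N))
    (g : N →ₗ[R] M) : U (f ∘ₗ g) = T (g ∘ₗ f) := by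
  obtain ⟨t, rfl⟩ := hf
  induction t with
  | zero => simp
  | add s t hs ht => simp only [map_add, LinearMap.add_comp, LinearMap.comp_add, hs, ht]
  | tmul φ n =>
    have hfg : dualTensorHom R M N (φ ⊗ₜ n) ∘ₗ g = dualTensorHom R N N ((φ ∘ₗ g) ⊗ₜ n) := by
      ext; simp
    have hgf : g ∘ₗ dualTensorHom R M N (φ ⊗ₜ n) = dualTensorHom R M M (φ ⊗ₜ g n) := by
      ext; simp
    rw [hfg, hgf, isTrace_iff.1 hU, isTrace_iff.1 hT, LinearMap.comp_apply]

theorem IsTrace.algebraMap_apply_one_of_projective [Module.Finite R F] [Projective R F]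
    {T : End R F →ₗ[R] R} (hT : IsTrace T) (K : Type*) [Field K] [Algebra R K] :
    algebraMap R K (T 1) = finrank K (K ⊗[R] F) := by
  obtain ⟨n, p, i, -, -, hpi⟩ := Module.Finite.exists_comp_eq_id_of_projective R F
  have hone : T 1 = LinearMap.trace R (Fin n → R) (i ∘ₗ p) := by
    rw [End.one_eq_id, ← hpi]
    exact isTrace_trace.apply_comp_comm hT (dualTensorHom_bijective.surjective p) i
  rw [hone, ← LinearMap.trace_baseChange, LinearMap.baseChange_comp, LinearMap.trace_comp_comm',
    ← LinearMap.baseChange_comp, hpi, LinearMap.baseChange_id, LinearMap.trace_id]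

lemma IsTrace.algebraMap_residueField_apply_one [Module.Finite R F] [Projective R F]
    {T : End R F →ₗ[R] R} (hT : IsTrace T) (q : PrimeSpectrum R) :
    algebraMap R q.asIdeal.ResidueField (T 1) = rankAtStalk F q := by
  rw [hT.algebraMap_apply_one_of_projective, rankAtStalk_eq]

end Trace

section TraceQuotient

variable {R F : Type*} [CommRing R] [AddCommGroup F] [Module R F] {N : Submodule R F}

lemma mapQLinear_surjective {M : Type*} [AddCommGroup M] [Module R M] [Projective R F]
    (N : Submodule R F) (Q : Submodule R M) : Function.Surjective (N.mapQLinear Q) := by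
  intro φ
  obtain ⟨ψ, hψ⟩ := projective_lifting_property Q.mkQ (φ ∘ₗ N.mkQ) Q.mkQ_surjective
  refine ⟨⟨ψ, fun x hx => ?_⟩, Submodule.linearMap_qext _ hψ⟩
  have h : Q.mkQ (ψ x) = φ (N.mkQ x) := LinearMap.congr_fun hψ x
  rw [Submodule.mem_comap, ← Submodule.Quotient.mk_eq_zero]
  simpa [(Submodule.Quotient.mk_eq_zero N).2 hx] using h

/-- Restriction to `N`, as a linear map on the endomorphisms of `F` that preserve `N`. -/
def restrictEnd (N : Submodule R F) : N.compatibleMaps N →ₗ[R] End R N where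
  toFun ψ := ψ.1.restrict ψ.2
  map_add' _ _ := rfl
  map_smul' _ _ := rfl

/-- The difference `tr ψ - tr (ψ|N)` for endomorphisms `ψ` of `F` that preserve `N`; it is the
candidate for the trace of the endomorphism of `F ⧸ N` induced by `ψ`. -/
def traceSub (T : End R F →ₗ[R] R) (U : End R N →ₗ[R] R) : N.compatibleMaps N →ₗ[R] R :=
  T ∘ₗ (N.compatibleMaps N).subtype - U ∘ₗ restrictEnd N

variable {T : End R F →ₗ[R] R} {U : End R N →ₗ[R] R}

lemma IsTrace.of_comp_mapQLinear_eq_traceSub (hT : IsTrace T) {V : End R (F ⧸ N) →ₗ[R] R}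
    (hV : V ∘ₗ N.mapQLinear N = traceSub T U) : IsTrace V := by
  refine isTrace_iff.2 fun φ m => ?_
  obtain ⟨y, rfl⟩ := N.mkQ_surjective m
  have hφ {x : F} (hx : x ∈ N) : φ (Submodule.Quotient.mk x) = 0 := by
    rw [(Submodule.Quotient.mk_eq_zero N).2 hx, map_zero]
  let ψ : N.compatibleMaps N := ⟨dualTensorHom R F F ((φ ∘ₗ N.mkQ) ⊗ₜ y), fun x hx => by
    simp [hφ hx]⟩
  have hind : N.mapQLinear N ψ = dualTensorHom R _ _ (φ ⊗ₜ N.mkQ y) :=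
    Submodule.linearMap_qext _ rfl
  have hres : restrictEnd N ψ = 0 := by
    ext x
    exact (congrArg (· • y) (hφ x.2)).trans (zero_smul R y)
  calc V (dualTensorHom R _ _ (φ ⊗ₜ N.mkQ y))
    _ = T ψ - U (restrictEnd N ψ) := by rw [← hind]; exact LinearMap.congr_fun hV ψ
    _ = φ (N.mkQ y) := by
      rw [hres, map_zero, sub_zero, isTrace_iff.1 hT, LinearMap.comp_apply]

variable [Module.Finite R F] [Projective R F]

lemma IsTrace.traceSub_eq_zero (hT : IsTrace T) (hU : IsTrace U) {ψ : N.compatibleMaps N}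
    (hψ : N.mapQLinear N ψ = 0) : traceSub T U ψ = 0 := by
  have hmem : ∀ x, ψ.1 x ∈ N := fun x =>
    (Submodule.Quotient.mk_eq_zero N).1 (LinearMap.congr_fun hψ (N.mkQ x))
  let θ : F →ₗ[R] N := ψ.1.codRestrict N hmem
  have hcomm : U (θ ∘ₗ N.subtype) = T (N.subtype ∘ₗ θ) :=
    hT.apply_comp_comm hU (dualTensorHom_bijective.surjective θ) N.subtype
  exact sub_eq_zero.2 hcomm.symm

theorem IsTrace.exists_quotient (hT : IsTrace T) (hU : IsTrace U) :
    ∃ V : End R (F ⧸ N) →ₗ[R] R, IsTrace V ∧ V 1 = T 1 - U 1 := by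
  have hmem : traceSub T U ∈ LinearMap.range (N.mapQLinear N).dualMap := by
    rw [LinearMap.range_dualMap_eq_dualAnnihilator_ker_of_surjective _ (mapQLinear_surjective N N),
      Submodule.mem_dualAnnihilator]
    exact fun ψ hψ => hT.traceSub_eq_zero hU hψ
  obtain ⟨V, hV⟩ := hmem
  refine ⟨V, hT.of_comp_mapQLinear_eq_traceSub hV, ?_⟩
  have hind : N.mapQLinear N ⟨1, le_refl N⟩ = 1 := Submodule.mapQ_id N
  rw [← hind]
  exact LinearMap.congr_fun hV _

end TraceQuotient

section EulerCharacteristic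

variable {R : Type*} [CommRing R]

lemma isArtinianRing_localization_of_mem_minimalPrimes [IsNoetherianRing R] {p : Ideal R}
    [p.IsPrime] (hp : p ∈ minimalPrimes R) : IsArtinianRing (Localization.AtPrime p) :=
  isArtinianRing_iff_isNoetherianRing_krullDimLE_zero.2
    ⟨IsLocalization.isNoetherianRing p.primeCompl _ inferInstance,
      Ring.KrullDimLE.of_isLocalization p hp _⟩

/-- The length of the stalk `M_p` over `R_p`; the junk value `0` if it is infinite. -/
noncomputable def lengthAtStalk (M : Type*) [AddCommGroup M] [Module R M] (p : PrimeSpectrum R) :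
    ℕ :=
  (Module.length (Localization.AtPrime p.asIdeal)
    (LocalizedModule p.asIdeal.primeCompl M)).toNat

/-- `χ` is the Euler characteristic of `M`, the alternating sum of the ranks in a finite projective
resolution. It is encoded without a resolution, by two properties that determine `χ` when `R` is
noetherian: it is constant along specializations and computes lengths at the minimal primes. -/
structure IsEulerCharacteristic (M : Type*) [AddCommGroup M] [Module R M]
    (χ : PrimeSpectrum R → ℤ) : Prop where
  eq_of_le ⦃p q : PrimeSpectrum R⦄ : p ≤ q → χ p = χ q
  lengthAtStalk_eq ⦃p : PrimeSpectrum R⦄ : p.asIdeal ∈ minimalPrimes R →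
    (lengthAtStalk M p : ℤ) = χ p * (Module.length (Localization.AtPrime p.asIdeal)
      (Localization.AtPrime p.asIdeal)).toNat

variable {M N F : Type*} [AddCommGroup M] [Module R M] [AddCommGroup N] [Module R N]
  [AddCommGroup F] [Module R F]

lemma lengthAtStalk_of_projective [Module.Finite R F] [Projective R F] (p : PrimeSpectrum R) :
    lengthAtStalk F p = rankAtStalk F p * (Module.length (Localization.AtPrime p.asIdeal)
      (Localization.AtPrime p.asIdeal)).toNat := by
  have : Free (Localization.AtPrime p.asIdeal) (LocalizedModule p.asIdeal.primeCompl F) :=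
    free_of_flat_of_isLocalRing
  rw [lengthAtStalk, rankAtStalk, length_of_free_of_finite, ENat.toNat_mul, ENat.toNat_natCast]

lemma isEulerCharacteristic_rankAtStalk [Module.Finite R F] [Projective R F] :
    IsEulerCharacteristic F fun p : PrimeSpectrum R => (rankAtStalk F p : ℤ) where
  eq_of_le p q hpq := by rw [rankAtStalk_eq_of_le_of_finite_of_flat F hpq]
  lengthAtStalk_eq p _ := by rw [lengthAtStalk_of_projective, Nat.cast_mul]

variable [IsNoetherianRing R]

lemma lengthAtStalk_eq_add_of_exact [Module.Finite R N] [Module.Finite R M] {f : N →ₗ[R] F}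
    {g : F →ₗ[R] M} (hf : Function.Injective f) (hg : Function.Surjective g)
    (hfg : Function.Exact f g) {p : PrimeSpectrum R} (hp : p.asIdeal ∈ minimalPrimes R) :
    lengthAtStalk F p = lengthAtStalk N p + lengthAtStalk M p := by
  have := isArtinianRing_localization_of_mem_minimalPrimes hp
  let S := p.asIdeal.primeCompl
  rw [lengthAtStalk, Module.length_eq_add_of_exact (LocalizedModule.map S f)
      (LocalizedModule.map S g) (LocalizedModule.map_injective S f hf)
      (LocalizedModule.map_surjective S g hg) (LocalizedModule.map_exact S f g hfg),
    ENat.toNat_add Module.length_ne_top Module.length_ne_top]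
  rfl

lemma IsEulerCharacteristic.sub_of_exact [Module.Finite R N] [Module.Finite R M]
    {χ ξ : PrimeSpectrum R → ℤ} (hχ : IsEulerCharacteristic F χ) (hξ : IsEulerCharacteristic N ξ)
    {f : N →ₗ[R] F} {g : F →ₗ[R] M} (hf : Function.Injective f) (hg : Function.Surjective g)
    (hfg : Function.Exact f g) : IsEulerCharacteristic M (χ - ξ) where
  eq_of_le p q hpq := by rw [Pi.sub_apply, Pi.sub_apply, hχ.eq_of_le hpq, hξ.eq_of_le hpq]
  lengthAtStalk_eq p hp := by
    have hadd : (lengthAtStalk F p : ℤ) = lengthAtStalk N p + lengthAtStalk M p :=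
      mod_cast lengthAtStalk_eq_add_of_exact hf hg hfg hp
    rw [hχ.lengthAtStalk_eq hp, hξ.lengthAtStalk_eq hp] at hadd
    rw [Pi.sub_apply, sub_mul, hadd, add_sub_cancel_left]

lemma lengthAtStalk_ne_zero [Module.Finite R M] {p : PrimeSpectrum R}
    (hp : p.asIdeal ∈ minimalPrimes R) (hpM : p ∈ support R M) : lengthAtStalk M p ≠ 0 := by
  have := isArtinianRing_localization_of_mem_minimalPrimes hp
  have := mem_support_iff.1 hpM
  rw [lengthAtStalk, ne_eq, ENat.toNat_eq_zero, not_or]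
  exact ⟨Module.length_pos.ne', Module.length_ne_top⟩

theorem IsEulerCharacteristic.ne_zero [Module.Finite R M] {χ : PrimeSpectrum R → ℤ}
    (hχ : IsEulerCharacteristic M χ) (hM : support R M = Set.univ) (q : PrimeSpectrum R) :
    χ q ≠ 0 := by
  obtain ⟨p, hp, hpq⟩ := Ideal.exists_minimalPrimes_le (bot_le : ⊥ ≤ q.asIdeal)
  let p' : PrimeSpectrum R := ⟨p, hp.1.1⟩
  intro hq
  have hlen := hχ.lengthAtStalk_eq (p := p') hp
  rw [hχ.eq_of_le (p := p') (q := q) hpq, hq, zero_mul, Nat.cast_eq_zero] at hlen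
  exact lengthAtStalk_ne_zero (p := p') hp (hM ▸ Set.mem_univ p') hlen

end EulerCharacteristic

section FiniteProjectiveDimension

open CategoryTheory

lemma HasFiniteProjectiveDimension.exists_hasProjectiveDimensionLE {R M : Type} [CommRing R]
    [AddCommGroup M] [Module R M] (h : HasFiniteProjectiveDimension R M) :
    ∃ n : ℕ, HasProjectiveDimensionLE (ModuleCat.of R M) n := by
  obtain ⟨n, P, hP⟩ := h
  let := HasExt.standard (ModuleCat.{0} R)
  refine ⟨n, HasProjectiveDimensionLT.mk fun i hi Y e => ?_⟩
  obtain ⟨f, hf, rfl⟩ := P.extMk_surjective e (i + 1) rfl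
  obtain rfl : f = 0 := (hP i hi).eq_of_src _ _
  simp

variable {R : Type u} [CommRing R] [IsNoetherianRing R]

theorem exists_isTrace_isEulerCharacteristic (n : ℕ) (M : Type u) [AddCommGroup M] [Module R M]
    [Module.Finite R M] (hM : HasProjectiveDimensionLE (ModuleCat.of R M) n) :
    ∃ (T : End R M →ₗ[R] R) (χ : PrimeSpectrum R → ℤ), IsTrace T ∧ IsEulerCharacteristic M χ ∧
      ∀ q : PrimeSpectrum R, algebraMap R q.asIdeal.ResidueField (T 1) = χ q := by
  induction n generalizing M with
  | zero =>
    have : CategoryTheory.Projective (ModuleCat.of R M) :=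
      (projective_iff_hasProjectiveDimensionLE_zero _).2 hM
    have : Module.Projective R M := (IsProjective.iff_projective M).2 this
    obtain ⟨T, hT⟩ := exists_isTrace_of_projective R M
    exact ⟨T, _, hT, isEulerCharacteristic_rankAtStalk, fun q => by
      rw [hT.algebraMap_residueField_apply_one, Int.cast_natCast]⟩
  | succ n ih =>
    obtain ⟨k, π, hπ⟩ := Module.Finite.exists_fin' R M
    have hker : HasProjectiveDimensionLE (ModuleCat.of R (LinearMap.ker π)) n :=
      ((LinearMap.shortExact_shortComplexKer hπ).hasProjectiveDimensionLT_X₃_iff n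
        ((IsProjective.iff_projective (Fin k → R)).1 inferInstance)).1 hM
    have hT : IsTrace (LinearMap.trace R (Fin k → R)) := isTrace_trace
    obtain ⟨U, ξ, hU, hξ, hUq⟩ := ih (LinearMap.ker π) hker
    obtain ⟨V, hV, hV1⟩ := hT.exists_quotient hU
    let e := (π.quotKerEquivOfSurjective hπ).symm
    have hχ := isEulerCharacteristic_rankAtStalk.sub_of_exact hξ
      (LinearMap.ker π).injective_subtype hπ (LinearMap.exact_subtype_ker_map π)
    refine ⟨V ∘ₗ e.conj.toLinearMap, _, hV.comp_conj e, hχ, fun q => ?_⟩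
    have hone : V (e.conj 1) = LinearMap.trace R (Fin k → R) 1 - U 1 := by
      rw [← hV1]
      exact congrArg V e.conj_id
    rw [LinearMap.comp_apply, LinearEquiv.coe_coe, hone, map_sub,
      hT.algebraMap_residueField_apply_one, hUq, Pi.sub_apply, Int.cast_sub, Int.cast_natCast]

theorem exists_isTrace_isUnit_apply_one [Algebra ℚ R] {n : ℕ} {M : Type u} [AddCommGroup M]
    [Module R M] [Module.Finite R M] (hM : HasProjectiveDimensionLE (ModuleCat.of R M) n)
    (hsupp : support R M = Set.univ) : ∃ T : End R M →ₗ[R] R, IsTrace T ∧ IsUnit (T 1) := by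
  obtain ⟨T, χ, hT, hχ, hTq⟩ := exists_isTrace_isEulerCharacteristic n M hM
  refine ⟨T, hT, ?_⟩
  by_contra hnu
  obtain ⟨m, hm, hTm⟩ := exists_max_ideal_of_mem_nonunits hnu
  let q : PrimeSpectrum R := ⟨m, hm.isPrime⟩
  have : CharZero q.asIdeal.ResidueField := charZero_of_injective_algebraMap
    ((algebraMap R q.asIdeal.ResidueField).comp (algebraMap ℚ R)).injective
  have hχq : (χ q : q.asIdeal.ResidueField) = 0 := by
    rw [← hTq q, Ideal.algebraMap_residueField_eq_zero]
    exact hTm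
  exact hχ.ne_zero hsupp q (Int.cast_eq_zero.1 hχq)

theorem stmt13_general [Algebra ℚ R] {S : Type u} [Ring S] [Algebra R S]
    (hinj : Function.Injective (algebraMap R S)) [Module.Finite R S] {n : ℕ}
    (hS : HasProjectiveDimensionLE (ModuleCat.of R S) n) : ∃ ρ : S →ₗ[R] R, ρ 1 = 1 := by
  have hsupp : support R S = Set.univ := by
    rw [support_of_algebra, (RingHom.injective_iff_ker_eq_bot _).1 hinj]
    simp
  obtain ⟨T, -, u, hu⟩ := exists_isTrace_isUnit_apply_one hS hsupp
  refine ⟨(↑u⁻¹ : R) • (T ∘ₗ LinearMap.mul R S), ?_⟩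
  have hone : LinearMap.mul R S 1 = 1 := LinearMap.ext one_mul
  simp [hone, ← hu]

end FiniteProjectiveDimension

/-- **Koh's conjecture in characteristic zero.**  Let `R` be a noetherian ring
containing a field of characteristic zero, and `R ⊆ S` a module-finite extension such
that `S` has finite projective dimension as an `R`-module.  Then there is a
retraction `ρ : S → R`, i.e. an `R`-linear map with `ρ(1) = 1`. -/
theorem stmt13 (K R S : Type) [Field K] [CharZero K]
    [CommRing R] [IsNoetherianRing R] [Algebra K R]
    (hKinj : Function.Injective (algebraMap K R))
    [CommRing S] [Algebra R S] (hinj : Function.Injective (algebraMap R S))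
    [Module.Finite R S]
    (hpd : HasFiniteProjectiveDimension R S) :
    ∃ ρ : S →ₗ[R] R, ρ 1 = 1 := by
  let : Algebra ℚ R := ((algebraMap K R).comp (algebraMap ℚ K)).toAlgebra
  obtain ⟨n, hn⟩ := hpd.exists_hasProjectiveDimensionLE
  exact stmt13_general hinj hn
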